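/- arXiv:1803.07463 — 2 statements merged into one kernel-verified Lean document; each statement's English description precedes it below -/
import Mathlib

section
/- (Burnside's theorem) Let V be a nontrivial finite-dimensional vector space over ℂ and let A be a subalgebra of the algebra End(V) = Module.End ℂ V of all linear transformations of V. If A acts irreducibly, i.e., the only submodules p of V satisfying a x ∈ p for all a ∈ A and x ∈ p are the zero subspace ⊥ and the whole space ⊤, then A is the full algebra: A = End(V). -/
theorem burnside_theorem
    {V : Type*} [AddCommGroup V] [Module ℂ V] [FiniteDimensional ℂ V]
    [Nontrivial V]
    (A : Subalgebra ℂ (Module.End ℂ V))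
    (hirr : ∀ p : Submodule ℂ V,
      (∀ a ∈ A, ∀ x ∈ p, a x ∈ p) → p = ⊥ ∨ p = ⊤) :
    A = ⊤ := by
  have hs : IsSimpleModule A V := by
    rw [isSimpleModule_iff]
    refine { exists_pair_ne := ⟨⊥, ⊤, bot_ne_top⟩, eq_bot_or_eq_top := fun p => ?_ }
    rcases hirr (p.restrictScalars ℂ) (fun a ha x hx => p.smul_mem (⟨a, ha⟩ : A) hx) with h | h
    · left
      exact (Submodule.restrictScalars_eq_bot_iff ℂ A V).1 h
    · right
      exact (Submodule.restrictScalars_eq_top_iff ℂ A V).1 h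
  -- Schur: every A-endomorphism is a scalar
  have schur : ∀ g : Module.End A V, ∃ c : ℂ, ∀ x, g x = c • x := by
    intro g
    obtain ⟨c, hc⟩ := Module.End.exists_eigenvalue (g.restrictScalars ℂ : Module.End ℂ V)
    refine ⟨c, fun x => ?_⟩
    rcases hirr (Module.End.eigenspace (g.restrictScalars ℂ : Module.End ℂ V) c) (by
      intro a ha x hx
      rw [Module.End.mem_eigenspace_iff] at hx ⊢
      have h1 : g ((⟨a, ha⟩ : A) • x) = (⟨a, ha⟩ : A) • g x := g.map_smul _ _
      have h2 : g x = c • x := hx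
      rw [h2] at h1
      exact h1.trans (a.map_smul c x)) with h | h
    · exact absurd h hc
    · have : x ∈ Module.End.eigenspace (g.restrictScalars ℂ : Module.End ℂ V) c := by
        rw [h]; trivial
      exact Module.End.mem_eigenspace_iff.1 this
  rw [eq_top_iff]
  intro f _
  let F : Module.End (Module.End A V) V :=
    { toFun := f
      map_add' := f.map_add
      map_smul' := fun g x => by
        obtain ⟨c, hc⟩ := schur g
        simp [hc] }
  obtain ⟨s, hsp⟩ := (Module.finite_def.1 (inferInstance : Module.Finite ℂ V))
  obtain ⟨r, hr⟩ := jacobson_density (R := A) F s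
  have : f = r.1 := LinearMap.ext_on hsp (fun x hx => hr x hx)
  rw [this]
  exact r.2
end

section
/- Let P₁^z = [[1,0],[0,0]], P₂^z = [[0,0],[0,1]], P₁^x = (1/2)[[1,1],[1,1]], P₂^x = (1/2)[[1,−1],[−1,1]], P₁^y = (1/2)[[1,−i],[i,1]], P₂^y = (1/2)[[1,i],[−i,1]] be the six projection matrices built from the eigenvectors of the Pauli matrices, acting on ℂ² = Fin 2 → ℂ by matrix–vector multiplication. Then the only submodules of ℂ² invariant under all six of these linear maps are the zero subspace ⊥ and ℂ² itself; i.e., the intersection Lat(Σ^z) ∩ Lat(Σ^x) ∩ Lat(Σ^y) of their invariant-subspace lattices is {⊥, ⊤}. -/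
theorem no_common_invariant_subspace_three_contexts
    (P₁z P₂z P₁x P₂x P₁y P₂y : Matrix (Fin 2) (Fin 2) ℂ)
    (h1z : P₁z = !![1, 0; 0, 0])
    (h2z : P₂z = !![0, 0; 0, 1])
    (h1x : P₁x = (1 / 2 : ℂ) • !![1, 1; 1, 1])
    (h2x : P₂x = (1 / 2 : ℂ) • !![1, -1; -1, 1])
    (h1y : P₁y = (1 / 2 : ℂ) • !![1, -Complex.I; Complex.I, 1])
    (h2y : P₂y = (1 / 2 : ℂ) • !![1, Complex.I; -Complex.I, 1])
    (U : Submodule ℂ (Fin 2 → ℂ))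
    (hU : ∀ M ∈ ({P₁z, P₂z, P₁x, P₂x, P₁y, P₂y} :
        Set (Matrix (Fin 2) (Fin 2) ℂ)), ∀ x ∈ U, M.mulVecLin x ∈ U) :
    U = ⊥ ∨ U = ⊤ := by
  have hz1 : ∀ x ∈ U, P₁z.mulVecLin x ∈ U := hU _ (by simp)
  have hz2 : ∀ x ∈ U, P₂z.mulVecLin x ∈ U := hU _ (by simp)
  have hx1 : ∀ x ∈ U, P₁x.mulVecLin x ∈ U := hU _ (by simp)
  by_cases hb : U = ⊥
  · exact Or.inl hb
  right
  obtain ⟨v, hv, hv0⟩ := (Submodule.ne_bot_iff U).1 hb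
  rw [Submodule.eq_top_iff']
  intro y
  by_cases h0 : v 0 = 0
  · have h1 : v 1 ≠ 0 := by
      intro h1
      apply hv0
      ext i
      fin_cases i
      · exact h0
      · exact h1
    have key : y = (y 1 / v 1) • P₂z.mulVecLin v
        + (2 * y 0 / v 1) • P₁z.mulVecLin (P₁x.mulVecLin (P₂z.mulVecLin v)) := by
      subst h1z h2z h1x
      ext i
      fin_cases i <;> simp [Matrix.mulVec, dotProduct, Fin.sum_univ_two] <;> field_simp
    rw [key]
    exact U.add_mem (U.smul_mem _ (hz2 _ hv)) (U.smul_mem _ (hz1 _ (hx1 _ (hz2 _ hv))))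
  · have key : y = (y 0 / v 0) • P₁z.mulVecLin v
        + (2 * y 1 / v 0) • P₂z.mulVecLin (P₁x.mulVecLin (P₁z.mulVecLin v)) := by
      subst h1z h2z h1x
      ext i
      fin_cases i <;> simp [Matrix.mulVec, dotProduct, Fin.sum_univ_two] <;> field_simp
    rw [key]
    exact U.add_mem (U.smul_mem _ (hz1 _ hv)) (U.smul_mem _ (hz2 _ (hx1 _ (hz1 _ hv))))
end
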